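/- The elements of D (the extension-closure of the set of cones of elements of S in K^b(A)) are exactly those complexes that are isomorphic in K^b(A) to the cone of a morphism ⊕_{j=1}^{n} S⁻¹_j → ⊕_{j=1}^{n} S⁰_j given by a lower triangular matrix whose diagonal entries s₁, …, s_n are elements of S (with s_j : S⁻¹_j → S⁰_j) and whose below-diagonal entries f_{kl} : S⁻¹_k → S⁰_l (for k < l) are arbitrary morphisms of A, for some n ≥ 0. -/

import Mathlib

open CategoryTheory Limits Pretriangulated ZeroObject

universe v u v' u'

section TriangulatedPrelude

variable {C : Type u} [Category.{v} C] [HasZeroObject C] [HasShift C ℤ] [Preadditive C]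
  [∀ n : ℤ, (shiftFunctor C n).Additive] [Pretriangulated C]

/-- The objects of the smallest strict full triangulated subcategory of `C`
containing the set of objects `B`. -/
inductive genSub (B : Set C) : C → Prop
  | of (X : C) (hX : X ∈ B) : genSub B X
  | zero (X : C) (hX : IsZero X) : genSub B X
  | shift (X : C) (n : ℤ) (hX : genSub B X) : genSub B (X⟦n⟧)
  | ext₂ (T : Triangle C) (hT : T ∈ distTriang C) (h₁ : genSub B T.obj₁)
      (h₃ : genSub B T.obj₃) : genSub B T.obj₂

/-- The triangulated subcategory of `C` generated by `B`. -/
def genSubcat (B : Set C) : ObjectProperty C :=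
  genSub B

instance (B : Set C) : (genSubcat B).IsTriangulated where
  exists_zero := ⟨0, isZero_zero _, genSub.zero _ (isZero_zero _)⟩
  isStableUnderShiftBy n := ⟨fun X h => genSub.shift X n h⟩
  ext₂' T hT h₁ h₃ := ObjectProperty.le_isoClosure _ _ (genSub.ext₂ T hT h₁ h₃)

/-- The extension-closure of a class of objects `E`: the smallest class containing `E`
and `0` and such that for any distinguished triangle `X ⟶ Y ⟶ Z` with `X, Z` in the
class, `Y` is also in the class. -/
inductive extClosure (E : Set C) : C → Prop
  | of (X : C) (hX : X ∈ E) : extClosure E X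
  | zero (X : C) (hX : IsZero X) : extClosure E X
  | ext₂ (T : Triangle C) (hT : T ∈ distTriang C) (h₁ : extClosure E T.obj₁)
      (h₃ : extClosure E T.obj₃) : extClosure E T.obj₂

/-- `D_{[i,j]}`: the extension-closure of `∪_{i ≤ l ≤ j} D[l]`. -/
def shiftClosure (D : Set C) (i j : ℤ) : Set C :=
  extClosure {X | ∃ (Y : C) (l : ℤ), i ≤ l ∧ l ≤ j ∧ Y ∈ D ∧ X = Y⟦l⟧}

/-- `D_{≥ i} = ∪_{k ≥ i} D_{[i,k]}`. -/
def shiftClosureGE (D : Set C) (i : ℤ) : Set C := {X | ∃ k, i ≤ k ∧ X ∈ shiftClosure D i k}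

/-- `D_{≤ j} = ∪_{k ≤ j} D_{[k,j]}`. -/
def shiftClosureLE (D : Set C) (j : ℤ) : Set C := {X | ∃ k, k ≤ j ∧ X ∈ shiftClosure D k j}

/-- A set of objects `D` is weakly negative if `0 ∈ D` and `Hom(X, Y[i]) = 0`
for all `X, Y ∈ D` and all `i ≥ 2`. -/
def WeaklyNegative (D : Set C) : Prop :=
  (0 : C) ∈ D ∧ ∀ X ∈ D, ∀ Y ∈ D, ∀ i : ℤ, 2 ≤ i → ∀ f : X ⟶ (Y⟦i⟧), f = 0

end TriangulatedPrelude

attribute [local instance] Limits.hasBinaryBiproducts_of_finite_biproducts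

section KPrelude

variable {A : Type u} [Category.{v} A] [Preadditive A] [HasZeroObject A] [HasFiniteBiproducts A]

/-- The two-term cochain complex with `P` in degree `n` and `Q` in degree `n + 1`,
with differential given by `f : P ⟶ Q` (and all other terms `0`).
In particular, `twoComplex (-1) f` is the cone of a morphism `f` of `A`. -/
noncomputable def twoComplex (n : ℤ) {P Q : A} (f : P ⟶ Q) : CochainComplex A ℤ where
  X i := if i = n then P else if i = n + 1 then Q else 0
  d i j :=
    if hij : i = n ∧ j = n + 1 then
      eqToHom (by simp [hij.1]) ≫ f ≫
        eqToHom (by simp [hij.2, show ¬ ((n : ℤ) + 1 = n) by omega])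
    else 0
  shape i j hij := by
    rw [dif_neg]
    rintro ⟨rfl, rfl⟩
    exact hij rfl
  d_comp_d' i j k _ _ := by
    by_cases h1 : i = n ∧ j = n + 1
    · by_cases h2 : j = n ∧ k = n + 1
      · obtain ⟨h1a, h1b⟩ := h1; obtain ⟨h2a, h2b⟩ := h2; omega
      · rw [dif_neg h2, comp_zero]
    · rw [dif_neg h1, zero_comp]

/-- The chain map from the two-term complex (in degrees `n`, `n + 1`) determined by
`f : P ⟶ Q` to the complex concentrated in degree `n` with value `M`, whose degree `n`
component is `g : P ⟶ M`. -/
noncomputable def twoComplexToSingle (n : ℤ) {P Q M : A} (f : P ⟶ Q) (g : P ⟶ M) :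
    twoComplex n f ⟶ (HomologicalComplex.single A (ComplexShape.up ℤ) n).obj M where
  f i :=
    if h : i = n then
      eqToHom (by simp [twoComplex, h]) ≫ g ≫
        (HomologicalComplex.singleObjXSelf (ComplexShape.up ℤ) n M).inv ≫ eqToHom (by rw [h])
    else 0
  comm' i j hij := by
    simp only [ComplexShape.up_Rel] at hij
    by_cases hj : j = n
    · have hi : ¬ (i = n ∧ j = n + 1) := by rintro ⟨rfl, rfl⟩; omega
      have hd : (twoComplex n f).d i j = 0 := by
        exact dif_neg hi
      rw [hd, zero_comp]
      have : i ≠ n := by omega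
      rw [dif_neg this, zero_comp]
    · rw [dif_neg hj]
      rw [comp_zero]
      have : ((HomologicalComplex.single A (ComplexShape.up ℤ) n).obj M).d i j = 0 := by simp
      rw [this, comp_zero]

/-- The quotient functor `C^b(A) ⥤ K(A)` (restricted from all complexes). -/
noncomputable abbrev homotopyQ : CochainComplex A ℤ ⥤ HomotopyCategory A (ComplexShape.up ℤ) :=
  HomotopyCategory.quotient A (ComplexShape.up ℤ)

/-- The canonical embedding of `A` into the homotopy category, as complexes concentrated
in degree `0`. -/
noncomputable abbrev iotaA : A ⥤ HomotopyCategory A (ComplexShape.up ℤ) :=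
  HomologicalComplex.single A (ComplexShape.up ℤ) 0 ⋙ homotopyQ

/-- `B`: the set of cones of elements of `S`, viewed in the homotopy category. -/
def coneSet (S : MorphismProperty A) : Set (HomotopyCategory A (ComplexShape.up ℤ)) :=
  {X | ∃ (P Q : A) (s : P ⟶ Q), S s ∧ X = homotopyQ.obj (twoComplex (-1) s)}

/-- The Verdier localization functor of the homotopy category by the triangulated
subcategory `𝔻` generated by the cones of elements of `S`. -/
noncomputable abbrev locQ (S : MorphismProperty A) :
    HomotopyCategory A (ComplexShape.up ℤ) ⥤ (genSubcat (coneSet S)).trW.Localization :=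
  (genSubcat (coneSet S)).trW.Q

/-- The composite functor `A ⥤ K(A) ⥤ K(A)/𝔻`. -/
noncomputable abbrev uBig (S : MorphismProperty A) :
    A ⥤ (genSubcat (coneSet S)).trW.Localization :=
  iotaA ⋙ locQ S

/-- `A[S⁻¹]_add`: the full subcategory of the Verdier quotient whose
objects are those of `A` (viewed as complexes concentrated in degree `0`). -/
def AddLoc (S : MorphismProperty A) : Type u := A

noncomputable instance (S : MorphismProperty A) : Category (AddLoc S) where
  Hom X Y := (uBig S).obj X ⟶ (uBig S).obj Y
  id X := 𝟙 ((uBig S).obj X)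
  comp f g := f ≫ g

/-- The canonical functor `u : A ⥤ A[S⁻¹]_add` induced by the localization functor. -/
noncomputable def uFun (S : MorphismProperty A) : A ⥤ AddLoc S where
  obj X := X
  map f := (uBig S).map f
  map_id X := (uBig S).map_id X
  map_comp f g := (uBig S).map_comp f g

noncomputable instance (S : MorphismProperty A) : Preadditive (AddLoc S) where
  homGroup X Y := inferInstanceAs (AddCommGroup ((uBig S).obj X ⟶ (uBig S).obj Y))
  add_comp P Q R f f' g :=
    @Preadditive.add_comp _ _ _ ((uBig S).obj P) ((uBig S).obj Q) ((uBig S).obj R) f f' g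
  comp_add P Q R f g g' :=
    @Preadditive.comp_add _ _ _ ((uBig S).obj P) ((uBig S).obj Q) ((uBig S).obj R) f g g'

end KPrelude

section Aux

variable {A : Type u} [Category.{v} A] [Preadditive A] [HasZeroObject A] [HasFiniteBiproducts A]

lemma two_X_left (n : ℤ) {P Q : A} (f : P ⟶ Q) : (twoComplex n f).X n = P := by
  simp [twoComplex]

lemma two_X_right (n : ℤ) {P Q : A} (f : P ⟶ Q) : (twoComplex n f).X (n + 1) = Q := by
  simp [twoComplex]

lemma two_X_shift (n : ℤ) {P Q : A} (f : P ⟶ Q) :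
    ((twoComplex n f)⟦(1 : ℤ)⟧).X n = Q := two_X_right n f

lemma two_isZero (n : ℤ) {P Q : A} (f : P ⟶ Q) (i : ℤ) (h : i ≠ n) (h' : i ≠ n + 1) :
    IsZero ((twoComplex n f).X i) := by
  have : (twoComplex n f).X i = 0 := by simp [twoComplex, h, h']
  rw [this]
  exact isZero_zero A

lemma two_d (n : ℤ) {P Q : A} (f : P ⟶ Q) :
    (twoComplex n f).d n (n + 1) =
      eqToHom (two_X_left n f) ≫ f ≫ eqToHom (two_X_right n f).symm := by
  simp [twoComplex]

noncomputable def twF (n : ℤ) {P Q P₁ Q₁ : A} (f : P ⟶ Q) (f₁ : P₁ ⟶ Q₁) (a : P ⟶ P₁)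
    (b : Q ⟶ Q₁) (i : ℤ) : (twoComplex n f).X i ⟶ (twoComplex n f₁).X i :=
  if h : i = n then
    eqToHom (by rw [h, two_X_left]) ≫ a ≫ eqToHom (by rw [h, two_X_left])
  else if h' : i = n + 1 then
    eqToHom (by rw [h', two_X_right]) ≫ b ≫ eqToHom (by rw [h', two_X_right])
  else 0

lemma twF_left (n : ℤ) {P Q P₁ Q₁ : A} (f : P ⟶ Q) (f₁ : P₁ ⟶ Q₁) (a : P ⟶ P₁)
    (b : Q ⟶ Q₁) : twF n f f₁ a b n =
      eqToHom (two_X_left n f) ≫ a ≫ eqToHom (two_X_left n f₁).symm := by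
  simp [twF]

lemma twF_right (n : ℤ) {P Q P₁ Q₁ : A} (f : P ⟶ Q) (f₁ : P₁ ⟶ Q₁) (a : P ⟶ P₁)
    (b : Q ⟶ Q₁) : twF n f f₁ a b (n + 1) =
      eqToHom (two_X_right n f) ≫ b ≫ eqToHom (two_X_right n f₁).symm := by
  simp [twF]

lemma two_cases (n : ℤ) {P Q : A} (f : P ⟶ Q) (i : ℤ) :
    i = n ∨ i = n + 1 ∨ IsZero ((twoComplex n f).X i) := by
  by_cases h : i = n
  · exact Or.inl h
  · by_cases h' : i = n + 1
    · exact Or.inr (Or.inl h')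
    · exact Or.inr (Or.inr (two_isZero n f i h h'))

lemma twF_comp (n : ℤ) {P Q P₁ Q₁ P₂ Q₂ : A} (f : P ⟶ Q) (f₁ : P₁ ⟶ Q₁) (f₂ : P₂ ⟶ Q₂)
    (a : P ⟶ P₁) (b : Q ⟶ Q₁) (a' : P₁ ⟶ P₂) (b' : Q₁ ⟶ Q₂) (i : ℤ) :
    twF n f f₁ a b i ≫ twF n f₁ f₂ a' b' i = twF n f f₂ (a ≫ a') (b ≫ b') i := by
  rcases two_cases n f i with rfl | rfl | h
  · simp [twF_left]
  · simp [twF_right]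
  · exact h.eq_of_src _ _

lemma twF_id (n : ℤ) {P Q : A} (f : P ⟶ Q) (i : ℤ) : twF n f f (𝟙 P) (𝟙 Q) i = 𝟙 _ := by
  rcases two_cases n f i with rfl | rfl | h
  · simp [twF_left]
  · simp [twF_right]
  · exact h.eq_of_src _ _

lemma twF_zero (n : ℤ) {P Q P₁ Q₁ : A} (f : P ⟶ Q) (f₁ : P₁ ⟶ Q₁) (i : ℤ) :
    twF n f f₁ 0 0 i = 0 := by
  rcases two_cases n f i with rfl | rfl | h
  · simp [twF_left]
  · simp [twF_right]
  · exact h.eq_of_src _ _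

lemma twF_add (n : ℤ) {P Q P₁ Q₁ : A} (f : P ⟶ Q) (f₁ : P₁ ⟶ Q₁)
    (a : P ⟶ P₁) (b : Q ⟶ Q₁) (a' : P ⟶ P₁) (b' : Q ⟶ Q₁) (i : ℤ) :
    twF n f f₁ a b i + twF n f f₁ a' b' i = twF n f f₁ (a + a') (b + b') i := by
  rcases two_cases n f i with rfl | rfl | h
  · simp [twF_left]
  · simp [twF_right]
  · exact h.eq_of_src _ _

noncomputable def twHom (n : ℤ) {P Q P₁ Q₁ : A} (f : P ⟶ Q) (f₁ : P₁ ⟶ Q₁) (a : P ⟶ P₁)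
    (b : Q ⟶ Q₁) (w : a ≫ f₁ = f ≫ b) : twoComplex n f ⟶ twoComplex n f₁ where
  f i := twF n f f₁ a b i
  comm' i j hij := by
    obtain rfl : i + 1 = j := hij
    rcases two_cases n f i with rfl | rfl | h
    · simp [twF_left, twF_right, two_d, reassoc_of% w]
    · exact (two_isZero n f₁ (n + 1 + 1) (by omega) (by omega)).eq_of_tgt _ _
    · exact h.eq_of_src _ _

noncomputable def twIso (n : ℤ) {P Q P₁ Q₁ : A} (f : P ⟶ Q) (f₁ : P₁ ⟶ Q₁) (a : P ≅ P₁)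
    (b : Q ≅ Q₁) (w : a.hom ≫ f₁ = f ≫ b.hom) : twoComplex n f ≅ twoComplex n f₁ where
  hom := twHom n f f₁ a.hom b.hom w
  inv := twHom n f₁ f a.inv b.inv (by rw [Iso.inv_comp_eq, reassoc_of% w]; simp)
  hom_inv_id := by
    ext i
    simp [twHom, twF_comp, twF_id]
  inv_hom_id := by
    ext i
    simp [twHom, twF_comp, twF_id]

lemma two_hom_ext (n : ℤ) {P Q P₁ Q₁ : A} (f : P ⟶ Q) (f₁ : P₁ ⟶ Q₁)
    (φ ψ : twoComplex n f ⟶ (twoComplex n f₁)⟦(1 : ℤ)⟧) (h : φ.f n = ψ.f n) : φ = ψ := by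
  ext i
  rcases two_cases n f i with rfl | rfl | h
  · exact h
  · exact IsZero.eq_of_tgt (two_isZero n f₁ (n + 1 + 1) (by omega) (by omega)) _ _
  · exact h.eq_of_src _ _

/-- A split extension of arrows. -/
structure SplitExt {P Q Pm Qm P' Q' : A} (f : P ⟶ Q) (M : Pm ⟶ Qm) (g : P' ⟶ Q') where
  iP : P ⟶ Pm
  rP : Pm ⟶ P
  pP : Pm ⟶ P'
  sP : P' ⟶ Pm
  iQ : Q ⟶ Qm
  rQ : Qm ⟶ Q
  pQ : Qm ⟶ Q'
  sQ : Q' ⟶ Qm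
  ipP : iP ≫ pP = 0
  irP : iP ≫ rP = 𝟙 P
  spP : sP ≫ pP = 𝟙 P'
  idP : rP ≫ iP + pP ≫ sP = 𝟙 Pm
  ipQ : iQ ≫ pQ = 0
  irQ : iQ ≫ rQ = 𝟙 Q
  spQ : sQ ≫ pQ = 𝟙 Q'
  idQ : rQ ≫ iQ + pQ ≫ sQ = 𝟙 Qm
  wi : iP ≫ M = f ≫ iQ
  wp : pP ≫ g = M ≫ pQ

namespace SplitExt

variable {P Q Pm Qm P' Q' : A} {f : P ⟶ Q} {M : Pm ⟶ Qm} {g : P' ⟶ Q'} (E : SplitExt f M g)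

noncomputable def sc (n : ℤ) : ShortComplex (CochainComplex A ℤ) :=
  ShortComplex.mk (twHom n f M E.iP E.iQ E.wi) (twHom n M g E.pP E.pQ E.wp) (by
    ext i
    simp [twHom, twF_comp, E.ipP, E.ipQ, twF_zero])

noncomputable def spl (n i : ℤ) :
    ((E.sc n).map (HomologicalComplex.eval A (ComplexShape.up ℤ) i)).Splitting where
  r := twF n M f E.rP E.rQ i
  s := twF n g M E.sP E.sQ i
  f_r := by
    change twF n f M E.iP E.iQ i ≫ twF n M f E.rP E.rQ i = 𝟙 _
    rw [twF_comp, E.irP, E.irQ, twF_id]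
  s_g := by
    change twF n g M E.sP E.sQ i ≫ twF n M g E.pP E.pQ i = 𝟙 _
    rw [twF_comp, E.spP, E.spQ, twF_id]
  id := by
    change twF n M f E.rP E.rQ i ≫ twF n f M E.iP E.iQ i +
      twF n M g E.pP E.pQ i ≫ twF n g M E.sP E.sQ i = 𝟙 _
    rw [twF_comp, twF_comp, twF_add, E.idP, E.idQ, twF_id]

lemma dist (n : ℤ) : CochainComplex.trianglehOfDegreewiseSplit (E.sc n) (E.spl n) ∈
    distTriang (HomotopyCategory A (ComplexShape.up ℤ)) := by
  rw [HomotopyCategory.distinguished_iff_iso_trianglehOfDegreewiseSplit]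
  exact ⟨_, _, ⟨Iso.refl _⟩⟩

lemma hom_f (n : ℤ) : (CochainComplex.homOfDegreewiseSplit (E.sc n) (E.spl n)).f n =
    eqToHom (two_X_left n g) ≫ (E.sP ≫ M ≫ E.rQ) ≫ eqToHom (two_X_shift n f).symm := by
  rw [CochainComplex.homOfDegreewiseSplit_f]
  change twF n g M E.sP E.sQ n ≫ (twoComplex n M).d n (n + 1) ≫
    twF n M f E.rP E.rQ (n + 1) = _
  simp [twF_left, twF_right, two_d]

lemma conj_eq {X Y V W : A} (p : X = V) (q : Y = W) (φ : X ⟶ Y) :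
    eqToHom p ≫ (eqToHom p.symm ≫ φ ≫ eqToHom q) ≫ eqToHom q.symm = φ := by
  subst p q
  simp

/-- Recognition of an extension. -/
lemma recog (n : ℤ) (T : Triangle (HomotopyCategory A (ComplexShape.up ℤ)))
    (hT : T ∈ distTriang _) (e₁ : T.obj₁ ≅ homotopyQ.obj (twoComplex n f))
    (e₃ : T.obj₃ ≅ homotopyQ.obj (twoComplex n g))
    (φ : twoComplex n g ⟶ (twoComplex n f)⟦(1 : ℤ)⟧)
    (hφ : homotopyQ.map φ ≫ (homotopyQ.commShiftIso (1 : ℤ)).hom.app (twoComplex n f) =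
      e₃.inv ≫ T.mor₃ ≫ e₁.hom⟦(1 : ℤ)⟧')
    (h : E.sP ≫ M ≫ E.rQ = eqToHom (two_X_left n g).symm ≫ φ.f n ≫
      eqToHom (two_X_shift n f)) :
    Nonempty (T.obj₂ ≅ homotopyQ.obj (twoComplex n M)) := by
  have key : CochainComplex.homOfDegreewiseSplit (E.sc n) (E.spl n) = φ := by
    apply two_hom_ext
    rw [hom_f, h]
    exact conj_eq _ _ _
  refine ⟨Triangle.π₂.mapIso (isoTriangleOfIso₁₃ T _ hT (E.dist n) e₁ e₃ ?_)⟩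
  subst key
  have h2 := (Iso.inv_comp_eq e₃).1 hφ.symm
  exact h2

end SplitExt


section Sum

variable {α β : Type} [Fintype α] [Fintype β]

noncomputable def sI (P : α ⊕ β → A) : (⨁ fun b => P (Sum.inr b)) ⟶ ⨁ P :=
  biproduct.desc fun b => biproduct.ι P (Sum.inr b)
noncomputable def sR (P : α ⊕ β → A) : ⨁ P ⟶ (⨁ fun b => P (Sum.inr b)) :=
  biproduct.lift fun b => biproduct.π P (Sum.inr b)
noncomputable def sS (P : α ⊕ β → A) : (⨁ fun b => P (Sum.inl b)) ⟶ ⨁ P :=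
  biproduct.desc fun b => biproduct.ι P (Sum.inl b)
noncomputable def sP (P : α ⊕ β → A) : ⨁ P ⟶ (⨁ fun b => P (Sum.inl b)) :=
  biproduct.lift fun b => biproduct.π P (Sum.inl b)

lemma sI_inl (P : α ⊕ β → A) (a : α) : sI P ≫ biproduct.π P (Sum.inl a) = 0 := by
  ext b
  simp [sI, biproduct.ι_π_ne P (show (Sum.inr b : α ⊕ β) ≠ Sum.inl a by simp)]

lemma sI_inr (P : α ⊕ β → A) (b : β) : sI P ≫ biproduct.π P (Sum.inr b) =
    biproduct.π (fun b => P (Sum.inr b)) b := by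
  classical
  ext b'
  by_cases h : b' = b
  · subst h; simp [sI]
  · simp [sI, biproduct.ι_π_ne P (show (Sum.inr b' : α ⊕ β) ≠ Sum.inr b by simpa using h),
      biproduct.ι_π_ne (fun b => P (Sum.inr b)) h]

lemma sS_inr (P : α ⊕ β → A) (a : β) : sS P ≫ biproduct.π P (Sum.inr a) = 0 := by
  ext b
  simp [sS, biproduct.ι_π_ne P (show (Sum.inl b : α ⊕ β) ≠ Sum.inr a by simp)]

lemma sS_inl (P : α ⊕ β → A) (b : α) : sS P ≫ biproduct.π P (Sum.inl b) =
    biproduct.π (fun b => P (Sum.inl b)) b := by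
  classical
  ext b'
  by_cases h : b' = b
  · subst h; simp [sS]
  · simp [sS, biproduct.ι_π_ne P (show (Sum.inl b' : α ⊕ β) ≠ Sum.inl b by simpa using h),
      biproduct.ι_π_ne (fun b => P (Sum.inl b)) h]

lemma sR_π (P : α ⊕ β → A) (b : β) : sR P ≫ biproduct.π (fun b => P (Sum.inr b)) b =
    biproduct.π P (Sum.inr b) := by simp [sR]
lemma sP_π (P : α ⊕ β → A) (b : α) : sP P ≫ biproduct.π (fun b => P (Sum.inl b)) b =
    biproduct.π P (Sum.inl b) := by simp [sP]

lemma s_id (P : α ⊕ β → A) : sR P ≫ sI P + sP P ≫ sS P = 𝟙 _ := by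
  apply biproduct.hom_ext
  rintro (a | b)
  · simp [sI_inl, sS_inl, sP_π]
  · simp [sI_inr, sS_inr, sR_π]

noncomputable def sumExt (P Q : α ⊕ β → A) (m : ∀ k l, P k ⟶ Q l)
    (h0 : ∀ b a, m (Sum.inr b) (Sum.inl a) = 0) :
    SplitExt (biproduct.matrix fun k l : β => m (Sum.inr k) (Sum.inr l)) (biproduct.matrix m)
      (biproduct.matrix fun k l : α => m (Sum.inl k) (Sum.inl l)) where
  iP := sI P
  rP := sR P
  pP := sP P
  sP := sS P
  iQ := sI Q
  rQ := sR Q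
  pQ := sP Q
  sQ := sS Q
  ipP := by apply biproduct.hom_ext; intro a; simp [sP_π, sI_inl]
  irP := by apply biproduct.hom_ext; intro a; simp [sR_π, sI_inr]
  spP := by apply biproduct.hom_ext; intro a; simp [sP_π, sS_inl]
  idP := s_id P
  ipQ := by apply biproduct.hom_ext; intro a; simp [sP_π, sI_inl]
  irQ := by apply biproduct.hom_ext; intro a; simp [sR_π, sI_inr]
  spQ := by apply biproduct.hom_ext; intro a; simp [sP_π, sS_inl]
  idQ := s_id Q
  wi := by
    apply biproduct.hom_ext
    rintro (a | b)
    · rw [Category.assoc, Category.assoc, sI_inl, biproduct.matrix_π, comp_zero]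
      apply biproduct.hom_ext'
      intro b
      simp [sI, h0]
    · rw [Category.assoc, Category.assoc, sI_inr, biproduct.matrix_π, biproduct.matrix_π]
      apply biproduct.hom_ext'
      intro b
      simp [sI]
  wp := by
    apply biproduct.hom_ext
    intro a
    rw [Category.assoc, Category.assoc, sP_π, biproduct.matrix_π, biproduct.matrix_π]
    apply biproduct.hom_ext'
    rintro (a' | b')
    · have : biproduct.ι P (Sum.inl a') ≫ sP P = biproduct.ι (fun b => P (Sum.inl b)) a' := by
        rw [← biproduct.ι_desc (fun b => biproduct.ι P (Sum.inl b)) a', Category.assoc]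
        change _ ≫ sS P ≫ sP P = _
        rw [show sS P ≫ sP P = 𝟙 _ by apply biproduct.hom_ext; intro a; simp [sP_π, sS_inl]]
        simp
      simp [reassoc_of% this]
    · have : biproduct.ι P (Sum.inr b') ≫ sP P = 0 := by
        rw [← biproduct.ι_desc (fun b => biproduct.ι P (Sum.inr b)) b', Category.assoc]
        change _ ≫ sI P ≫ sP P = _
        rw [show sI P ≫ sP P = 0 by apply biproduct.hom_ext; intro a; simp [sP_π, sI_inl]]
        simp
      simp [reassoc_of% this, h0]

lemma sumExt_conn (P Q : α ⊕ β → A) (m : ∀ k l, P k ⟶ Q l)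
    (h0 : ∀ b a, m (Sum.inr b) (Sum.inl a) = 0) :
    (sumExt P Q m h0).sP ≫ biproduct.matrix m ≫ (sumExt P Q m h0).rQ =
      biproduct.matrix (fun (a : α) (b : β) => m (Sum.inl a) (Sum.inr b)) := by
  change sS P ≫ biproduct.matrix m ≫ sR Q = _
  apply biproduct.hom_ext
  intro b
  apply biproduct.hom_ext'
  intro a
  simp [sS, sR]

end Sum

noncomputable def reindexIso (n : ℤ) {γ δ : Type} [Fintype γ] [Fintype δ] (e : γ ≃ δ)
    (P Q : δ → A) (m : ∀ k l, P k ⟶ Q l) :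
    twoComplex n (biproduct.matrix (f := fun k => P (e k)) (g := fun k => Q (e k))
      fun k l : γ => m (e k) (e l)) ≅ twoComplex n (biproduct.matrix m) :=
  twIso n _ _ (biproduct.reindex e P) (biproduct.reindex e Q) (by
    rw [← Iso.comp_inv_eq]
    apply biproduct.hom_ext
    intro b
    apply biproduct.hom_ext'
    intro a
    simp [biproduct.reindex]
    erw [biproduct.lift_π, biproduct.lift_π])

noncomputable def uniqueIso (n : ℤ) {γ : Type} [Fintype γ] [Unique γ]
    (P Q : γ → A) (m : ∀ k l, P k ⟶ Q l) :
    twoComplex n (biproduct.matrix m) ≅ twoComplex n (m default default) :=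
  twIso n _ _ (biproductUniqueIso P) (biproductUniqueIso Q) (by
    have h (P : γ → A) : (biproductUniqueIso P).hom = biproduct.π P default := by
      apply biproduct.hom_ext'
      intro a
      obtain rfl := Subsingleton.elim a default
      simp [biproductUniqueIso, limitBiconeOfUnique]
    rw [h, h]
    apply biproduct.hom_ext'
    intro a
    obtain rfl := Subsingleton.elim a default
    simp)

lemma isZero_two (n : ℤ) {P Q : A} (f : P ⟶ Q) (hP : IsZero P) (hQ : IsZero Q) :
    IsZero (homotopyQ.obj (twoComplex n f)) := by
  rw [IsZero.iff_id_eq_zero, ← homotopyQ.map_id]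
  have : 𝟙 (twoComplex n f) = 0 := by
    ext i
    rw [HomologicalComplex.id_f, ← twF_id, hP.eq_of_src (𝟙 P) 0, hQ.eq_of_src (𝟙 Q) 0, twF_zero]
    rfl
  rw [this, Functor.map_zero]

lemma isZero_bip (P : Fin 0 → A) : IsZero (⨁ P) := by
  rw [IsZero.iff_id_eq_zero]
  apply biproduct.hom_ext
  intro k
  exact k.elim0

lemma extClosure_iso {E : Set (HomotopyCategory A (ComplexShape.up ℤ))}
    {X Y : HomotopyCategory A (ComplexShape.up ℤ)} (e : X ≅ Y) (h : extClosure E X) :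
    extClosure E Y := by
  have hT : Triangle.mk e.hom (0 : Y ⟶ 0) 0 ∈ distTriang _ := by
    rw [Triangle.distinguished_iff_of_isZero₃ _ (isZero_zero _)]
    exact e.isIso_hom
  exact extClosure.ext₂ _ hT h (extClosure.zero _ (isZero_zero _))

lemma ext_of_matrix (S : MorphismProperty A) (n : ℕ) (P Q : Fin n → A)
    (m : ∀ k l : Fin n, P k ⟶ Q l) (hS : ∀ k, S (m k k)) (h0 : ∀ k l, l < k → m k l = 0) :
    extClosure (coneSet S) (homotopyQ.obj (twoComplex (-1) (biproduct.matrix m))) := by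
  induction n with
  | zero => exact extClosure.zero _ (isZero_two _ _ (isZero_bip P) (isZero_bip Q))
  | succ n ih =>
    let e : Fin n ⊕ Fin 1 ≃ Fin (n + 1) := finSumFinEquiv
    refine extClosure_iso (homotopyQ.mapIso (reindexIso (-1) e P Q m)) ?_
    let E := sumExt (fun k => P (e k)) (fun k => Q (e k)) (fun k l => m (e k) (e l)) (by
      intro b a
      apply h0
      have h1 : (e (Sum.inl a)).1 = a.1 := rfl
      have h2 : (e (Sum.inr b)).1 = n + b.1 := rfl
      rw [Fin.lt_def, h1, h2]
      omega)
    refine extClosure.ext₂ _ (E.dist (-1)) ?_ ?_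
    · refine extClosure_iso (homotopyQ.mapIso (uniqueIso (-1) _ _ _).symm)
        (extClosure.of _ ⟨_, _, _, hS _, rfl⟩)
    · refine ih _ _ _ (fun k => hS _) (fun k l h => h0 _ _ ?_)
      exact h

lemma matrix_of_ext (S : MorphismProperty A) (X : HomotopyCategory A (ComplexShape.up ℤ))
    (hX : extClosure (coneSet S) X) :
      ∃ (n : ℕ) (P Q : Fin n → A) (m : ∀ k l : Fin n, P k ⟶ Q l),
        (∀ k : Fin n, S (m k k)) ∧ (∀ k l : Fin n, l < k → m k l = 0) ∧
        Nonempty (X ≅ homotopyQ.obj (twoComplex (-1) (biproduct.matrix m))) := by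
  induction hX with
  | of X hX =>
    obtain ⟨P, Q, s, hs, rfl⟩ := hX
    refine ⟨1, fun _ => P, fun _ => Q, fun _ _ => s, fun _ => hs, fun k l h => ?_,
      ⟨homotopyQ.mapIso (uniqueIso (-1) (γ := Fin 1) (fun _ => P) (fun _ => Q)
        (fun _ _ => s)).symm⟩⟩
    omega
  | zero X hX =>
    exact ⟨0, fun _ => 0, fun _ => 0, fun _ _ => 0, fun k => k.elim0, fun k => k.elim0,
      ⟨hX.iso (isZero_two _ _ (isZero_bip _) (isZero_bip _))⟩⟩
  | ext₂ T hT h₁ h₃ ih₁ ih₃ =>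
    obtain ⟨b, P, Q, m, hS, h0, ⟨e₁⟩⟩ := ih₁
    obtain ⟨a, P', Q', m', hS', h0', ⟨e₃⟩⟩ := ih₃
    obtain ⟨φ, hφ⟩ := homotopyQ.map_surjective
      ((e₃.inv ≫ T.mor₃ ≫ e₁.hom⟦(1 : ℤ)⟧') ≫
        (homotopyQ.commShiftIso (1 : ℤ)).inv.app (twoComplex (-1) (biproduct.matrix m)))
    let h : ⨁ P' ⟶ ⨁ Q := eqToHom (two_X_left (-1) (biproduct.matrix m')).symm ≫ φ.f (-1) ≫
      eqToHom (two_X_shift (-1) (biproduct.matrix m))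
    let PS : Fin a ⊕ Fin b → A := Sum.elim P' P
    let QS : Fin a ⊕ Fin b → A := Sum.elim Q' Q
    let mS : ∀ k l, PS k ⟶ QS l := fun k l => match k, l with
      | Sum.inl k, Sum.inl l => m' k l
      | Sum.inl k, Sum.inr l => biproduct.components h k l
      | Sum.inr k, Sum.inl l => 0
      | Sum.inr k, Sum.inr l => m k l
    let E := sumExt PS QS mS (fun _ _ => rfl)
    have hφ' : homotopyQ.map φ ≫ (homotopyQ.commShiftIso (1 : ℤ)).hom.app
        (twoComplex (-1) (biproduct.matrix m)) = e₃.inv ≫ T.mor₃ ≫ e₁.hom⟦(1 : ℤ)⟧' := by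
      rw [hφ, Category.assoc, Iso.inv_hom_id_app]
      exact Category.comp_id _
    have hE := E.recog (-1) T hT e₁ e₃ φ hφ' (by
      refine (sumExt_conn PS QS mS (fun _ _ => rfl)).trans ?_
      exact biproduct.components_matrix h)
    obtain ⟨iso⟩ := hE
    let e : Fin (a + b) ≃ Fin a ⊕ Fin b := finSumFinEquiv.symm
    refine ⟨a + b, fun k => PS (e k), fun k => QS (e k), fun k l => mS (e k) (e l), ?_, ?_,
      ⟨iso ≪≫ homotopyQ.mapIso (reindexIso (-1) e PS QS mS).symm⟩⟩
    · intro k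
      change S (mS (e k) (e k))
      generalize e k = x
      rcases x with x | x
      · exact hS' x
      · exact hS x
    · intro k l hkl
      obtain ⟨x, rfl⟩ := finSumFinEquiv.surjective k
      obtain ⟨y, rfl⟩ := finSumFinEquiv.surjective l
      have hx : e (finSumFinEquiv x) = x := finSumFinEquiv.symm_apply_apply x
      have hy : e (finSumFinEquiv y) = y := finSumFinEquiv.symm_apply_apply y
      have : mS x y = 0 := by
        rcases x with x | x <;> rcases y with y | y
        · exact h0' _ _ hkl
        · exfalso
          have hkl' : a + y.1 < x.1 := hkl
          omega
        · rfl
        · exact h0 _ _ (Nat.lt_of_add_lt_add_left (n := a) hkl)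
      change mS (e (finSumFinEquiv x)) (e (finSumFinEquiv y)) = 0
      rw [hx, hy]
      exact this

end Aux

/-- Proposition: the extension-closure `D` of the set of cones of elements of `S`
consists exactly of the complexes isomorphic to cones of lower triangular matrix
morphisms with diagonal entries in `S`. -/
theorem statement11 {A : Type u} [Category.{v} A] [Preadditive A] [HasZeroObject A]
    [HasFiniteBiproducts A] (S : MorphismProperty A)
    (X : HomotopyCategory A (ComplexShape.up ℤ)) :
    extClosure (coneSet S) X ↔
      ∃ (n : ℕ) (P Q : Fin n → A) (m : ∀ k l : Fin n, P k ⟶ Q l),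
        (∀ k : Fin n, S (m k k)) ∧ (∀ k l : Fin n, l < k → m k l = 0) ∧
        Nonempty (X ≅ homotopyQ.obj (twoComplex (-1) (biproduct.matrix m))) := by
  constructor
  · exact matrix_of_ext S X
  · rintro ⟨n, P, Q, m, hS, h0, ⟨e⟩⟩
    exact extClosure_iso e.symm (ext_of_matrix S n P Q m hS h0)
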